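/- For K > 1, exp(π(K−1)) ≤ λ(K) ≤ exp(π(K−1/K)), where λ(K) = u²/(1−u²) with u = φ_K(1/√2). -/

import Mathlib

noncomputable def ellK (r : ℝ) : ℝ :=
  ∫ θ in (0:ℝ)..(Real.pi/2), 1 / Real.sqrt (1 - r^2 * Real.sin θ ^ 2)

noncomputable def mu (r : ℝ) : ℝ :=
  (Real.pi/2) * ellK (Real.sqrt (1 - r^2)) / ellK r

noncomputable def muInv (y : ℝ) : ℝ := Function.invFunOn mu (Set.Ioo 0 1) y

noncomputable def phi (K r : ℝ) : ℝ :=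
  if r = 0 then 0 else if r = 1 then 1 else muInv (mu r / K)

open Real Set Filter Topology MeasureTheory

/-- The complete elliptic integral of the first kind as a function of the parameter `m = r ^ 2`. -/
noncomputable def ellKParam (m : ℝ) : ℝ :=
  ∫ θ in (0 : ℝ)..(π / 2), 1 / √(1 - m * sin θ ^ 2)

/-- The complete elliptic integral of the second kind as a function of the parameter `m = r ^ 2`. -/
noncomputable def ellEParam (m : ℝ) : ℝ :=
  ∫ θ in (0 : ℝ)..(π / 2), √(1 - m * sin θ ^ 2)

theorem one_sub_mul_sin_sq_pos {m : ℝ} (hm : m < 1) (θ : ℝ) : 0 < 1 - m * sin θ ^ 2 := by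
  rcases eq_or_ne (sin θ) 0 with h | h
  · simp [h]
  · nlinarith [sin_sq_le_one θ, sq_pos_of_ne_zero h]

theorem le_one_sub_mul_sin_sq {m c : ℝ} (hc : c ≤ 1) (hm : m ≤ 1 - c) (θ : ℝ) :
    c ≤ 1 - m * sin θ ^ 2 := by
  nlinarith [sin_sq_add_cos_sq θ, sq_nonneg (sin θ), sq_nonneg (cos θ)]

theorem continuous_sqrt_one_sub (m : ℝ) : Continuous fun θ => √(1 - m * sin θ ^ 2) := by
  fun_prop

theorem continuous_one_div_sqrt_one_sub {m : ℝ} (hm : m < 1) :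
    Continuous fun θ => 1 / √(1 - m * sin θ ^ 2) :=
  continuous_const.div (continuous_sqrt_one_sub m)
    fun θ => (sqrt_pos.2 (one_sub_mul_sin_sq_pos hm θ)).ne'

theorem continuous_one_div_sqrt_one_sub_cube {m : ℝ} (hm : m < 1) :
    Continuous fun θ => 1 / √(1 - m * sin θ ^ 2) ^ 3 :=
  continuous_const.div ((continuous_sqrt_one_sub m).pow 3)
    fun θ => (pow_pos (sqrt_pos.2 (one_sub_mul_sin_sq_pos hm θ)) 3).ne'

theorem integral_inv_one_sub_mul_sin_sq {b : ℝ} (hb : 0 < b) :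
    ∫ θ in (0 : ℝ)..(π / 2), b / (1 - (1 - b ^ 2) * sin θ ^ 2) = π / 2 := by
  have hden (θ : ℝ) : 0 < cos θ ^ 2 + b * sin θ ^ 2 := by
    rcases eq_or_ne (sin θ) 0 with h | h
    · have := sin_sq_add_cos_sq θ
      rw [h] at this ⊢
      nlinarith
    · positivity
  have hpos (θ : ℝ) : 0 < 1 - (1 - b ^ 2) * sin θ ^ 2 :=
    one_sub_mul_sin_sq_pos (by nlinarith [pow_pos hb 2]) θ
  have hderiv (θ : ℝ) : HasDerivAt
      (fun θ => θ - arctan ((1 - b) * (sin θ * cos θ) / (cos θ ^ 2 + b * sin θ ^ 2)))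
      (b / (1 - (1 - b ^ 2) * sin θ ^ 2)) θ := by
    have hs := hasDerivAt_sin θ
    have hc := hasDerivAt_cos θ
    have hq := ((hs.mul hc).const_mul (1 - b)).div ((hc.pow 2).add ((hs.pow 2).const_mul b))
      (hden θ).ne'
    refine ((hasDerivAt_id θ).sub hq.arctan).congr_deriv ?_
    simp only [Pi.div_apply, Pi.mul_apply, Pi.pow_apply, Pi.add_apply, Nat.cast_ofNat]
    have hp := hpos θ
    have hd := hden θ
    have e1 : (cos θ ^ 2 + b * sin θ ^ 2) ^ 2 + ((1 - b) * (sin θ * cos θ)) ^ 2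
        = 1 - (1 - b ^ 2) * sin θ ^ 2 := by
      rw [show cos θ ^ 2 = 1 - sin θ ^ 2 from cos_sq' θ, mul_pow, mul_pow,
        show cos θ ^ 2 = 1 - sin θ ^ 2 from cos_sq' θ]
      ring
    have e2 : 1 + ((1 - b) * (sin θ * cos θ) / (cos θ ^ 2 + b * sin θ ^ 2)) ^ 2
        = (1 - (1 - b ^ 2) * sin θ ^ 2) / (cos θ ^ 2 + b * sin θ ^ 2) ^ 2 := by
      rw [← e1]; field_simp
    rw [e2]
    field_simp
    have := cos_sq' θ
    grind
  rw [intervalIntegral.integral_eq_sub_of_hasDerivAt (fun θ _ => hderiv θ)]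
  · simp
  · exact (continuous_const.div (by fun_prop) fun θ => (hpos θ).ne').intervalIntegrable _ _

theorem ellKParam_le {m : ℝ} (hm : m < 1) : ellKParam m ≤ π / 2 / √√(1 - m) := by
  set c := √√(1 - m) with hc
  have hm' : 0 < 1 - m := by linarith
  have hcpos : 0 < c := by positivity
  have hcm : 1 - (c ^ 2) ^ 2 = m := by
    rw [hc, sq_sqrt (by positivity), sq_sqrt hm'.le]; ring
  have hint := integral_inv_one_sub_mul_sin_sq (pow_pos hcpos 2)
  rw [hcm] at hint
  have hcont : Continuous fun θ => c ^ 2 / (1 - m * sin θ ^ 2) :=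
    continuous_const.div (by fun_prop) fun θ => (one_sub_mul_sin_sq_pos hm θ).ne'
  have hle : ellKParam m ≤ ∫ θ in (0 : ℝ)..(π / 2),
      (1 / (2 * c)) * (c ^ 2 / (1 - m * sin θ ^ 2) + 1) := by
    refine intervalIntegral.integral_mono_on (by positivity)
      ((continuous_one_div_sqrt_one_sub hm).intervalIntegrable _ _)
      ((continuous_const.mul (hcont.add continuous_const)).intervalIntegrable _ _) fun θ _ => ?_
    have hf := one_sub_mul_sin_sq_pos hm θ
    have hq : 0 < √(1 - m * sin θ ^ 2) := sqrt_pos.2 hf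
    nth_rewrite 2 [← sq_sqrt hf.le]
    set q := √(1 - m * sin θ ^ 2)
    have : (1 / (2 * c)) * (c ^ 2 / q ^ 2 + 1) - 1 / q = (c - q) ^ 2 / (2 * c * q ^ 2) := by
      field_simp; ring
    have : 0 ≤ (c - q) ^ 2 / (2 * c * q ^ 2) := by positivity
    linarith
  refine hle.trans_eq ?_
  rw [intervalIntegral.integral_const_mul, intervalIntegral.integral_add
    (hcont.intervalIntegrable _ _) (continuous_const.intervalIntegrable _ _), hint]
  simp
  field_simp

theorem pi_div_two_le_ellKParam {m : ℝ} (h0 : 0 ≤ m) (hm : m < 1) : π / 2 ≤ ellKParam m := by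
  have : ∫ _ in (0 : ℝ)..(π / 2), (1 : ℝ) ≤ ellKParam m := by
    refine intervalIntegral.integral_mono_on (by positivity) (by simp)
      ((continuous_one_div_sqrt_one_sub hm).intervalIntegrable _ _) fun θ _ => ?_
    rw [le_div_iff₀ (sqrt_pos.2 (one_sub_mul_sin_sq_pos hm θ)), one_mul, sqrt_le_one]
    nlinarith [mul_nonneg h0 (sq_nonneg (sin θ))]
  simpa using this

theorem ellKParam_pos {m : ℝ} (h0 : 0 ≤ m) (hm : m < 1) : 0 < ellKParam m :=
  (by positivity : (0 : ℝ) < π / 2).trans_le (pi_div_two_le_ellKParam h0 hm)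

theorem mul_integral_sin_sq_div_sqrt {m : ℝ} (hm : m < 1) :
    m * ∫ θ in (0 : ℝ)..(π / 2), sin θ ^ 2 / √(1 - m * sin θ ^ 2)
      = ellKParam m - ellEParam m := by
  rw [ellKParam, ellEParam, ← intervalIntegral.integral_sub
    ((continuous_one_div_sqrt_one_sub hm).intervalIntegrable _ _)
    ((continuous_sqrt_one_sub m).intervalIntegrable _ _), ← intervalIntegral.integral_const_mul]
  congr 1 with θ
  have hf := one_sub_mul_sin_sq_pos hm θ
  have hq : 0 < √(1 - m * sin θ ^ 2) := sqrt_pos.2 hf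
  have := sq_sqrt hf.le
  field_simp
  linarith

theorem mul_integral_one_div_sqrt_cube {m : ℝ} (hm : m < 1) :
    (1 - m) * ∫ θ in (0 : ℝ)..(π / 2), 1 / √(1 - m * sin θ ^ 2) ^ 3 = ellEParam m := by
  have hderiv (θ : ℝ) : HasDerivAt (fun θ => m * (sin θ * cos θ) / √(1 - m * sin θ ^ 2))
      (√(1 - m * sin θ ^ 2) - (1 - m) * (1 / √(1 - m * sin θ ^ 2) ^ 3)) θ := by
    have hf := one_sub_mul_sin_sq_pos hm θ
    have hq : 0 < √(1 - m * sin θ ^ 2) := sqrt_pos.2 hf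
    have hs := hasDerivAt_sin θ
    have hc := hasDerivAt_cos θ
    refine (((hs.mul hc).const_mul m).div ((((hs.pow 2).const_mul m).const_sub 1).sqrt hf.ne')
      hq.ne').congr_deriv ?_
    simp only [Pi.mul_apply, Pi.pow_apply, Nat.cast_ofNat]
    have h2 := sq_sqrt hf.le
    have h3 := cos_sq' θ
    set q := √(1 - m * sin θ ^ 2)
    field_simp
    grind
  have hi := ((continuous_sqrt_one_sub m).intervalIntegrable (μ := volume) 0 (π / 2))
  have hi' := (((continuous_one_div_sqrt_one_sub_cube hm).const_mul (1 - m)).intervalIntegrable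
    (μ := volume) 0 (π / 2))
  have key := intervalIntegral.integral_eq_sub_of_hasDerivAt (a := 0) (b := π / 2)
    (fun θ _ => hderiv θ) (hi.sub hi')
  rw [intervalIntegral.integral_sub hi hi', intervalIntegral.integral_const_mul] at key
  simp only [sin_zero, cos_pi_div_two, mul_zero, zero_mul, zero_div, sub_zero] at key
  rw [ellEParam]
  linarith

theorem hasDerivAt_ellEParam {m : ℝ} (h0 : m ≠ 0) (hm : m < 1) :
    HasDerivAt ellEParam ((ellEParam m - ellKParam m) / (2 * m)) m := by
  have hint : ∫ θ in (0 : ℝ)..(π / 2), -sin θ ^ 2 / (2 * √(1 - m * sin θ ^ 2))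
      = (ellEParam m - ellKParam m) / (2 * m) := by
    have h := mul_integral_sin_sq_div_sqrt hm
    rw [eq_div_iff (by positivity)]
    have : ∫ θ in (0 : ℝ)..(π / 2), -sin θ ^ 2 / (2 * √(1 - m * sin θ ^ 2))
        = -(1 / 2) * ∫ θ in (0 : ℝ)..(π / 2), sin θ ^ 2 / √(1 - m * sin θ ^ 2) := by
      rw [← intervalIntegral.integral_const_mul]
      congr 1 with θ
      rw [neg_div, mul_comm (2 : ℝ), ← div_div]; ring
    rw [this]
    linarith
  rw [← hint]
  set c := min 1 ((1 - m) / 2)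
  have hcpos : 0 < c := lt_min one_pos (by linarith)
  have hlt {x : ℝ} (hx : x ∈ Iio (1 - c)) : x < 1 := by
    have : x < 1 - c := hx
    linarith
  have hmc : m < 1 - c := by linarith [min_le_right 1 ((1 - m) / 2)]
  refine (intervalIntegral.hasDerivAt_integral_of_dominated_loc_of_deriv_le
    (F := fun x θ => √(1 - x * sin θ ^ 2))
    (F' := fun x θ => -sin θ ^ 2 / (2 * √(1 - x * sin θ ^ 2))) (bound := fun _ => 1 / (2 * √c))
    (Iio_mem_nhds hmc) (.of_forall fun x =>
      (continuous_sqrt_one_sub x).aestronglyMeasurable)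
    ((continuous_sqrt_one_sub m).intervalIntegrable _ _) ?_ ?_ (by simp) ?_).2
  · exact (Continuous.div (by fun_prop) (by fun_prop) fun θ =>
      (mul_pos two_pos (sqrt_pos.2 (one_sub_mul_sin_sq_pos hm θ))).ne').aestronglyMeasurable
  · refine .of_forall fun θ _ x hx => ?_
    have hle := le_one_sub_mul_sin_sq (min_le_left _ _) (le_of_lt hx) θ
    have hsc : 0 < √c := sqrt_pos.2 hcpos
    rw [neg_div, norm_neg, norm_of_nonneg (by positivity)]
    exact div_le_div₀ zero_le_one (sin_sq_le_one θ) (by positivity)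
      (by gcongr)
  · refine .of_forall fun θ _ x hx => ?_
    have := (((hasDerivAt_id x).mul_const (sin θ ^ 2)).const_sub 1).sqrt
      (one_sub_mul_sin_sq_pos (hlt hx) θ).ne'
    simpa using this

theorem hasDerivAt_ellKParam {m : ℝ} (h0 : m ≠ 0) (hm : m < 1) :
    HasDerivAt ellKParam ((ellEParam m - (1 - m) * ellKParam m) / (2 * m * (1 - m))) m := by
  have hint : ∫ θ in (0 : ℝ)..(π / 2), sin θ ^ 2 / (2 * √(1 - m * sin θ ^ 2) ^ 3)
      = (ellEParam m - (1 - m) * ellKParam m) / (2 * m * (1 - m)) := by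
    have h := mul_integral_one_div_sqrt_cube hm
    have hm' : 1 - m ≠ 0 := by linarith
    have : ∫ θ in (0 : ℝ)..(π / 2), sin θ ^ 2 / (2 * √(1 - m * sin θ ^ 2) ^ 3)
        = (1 / (2 * m)) * ((∫ θ in (0 : ℝ)..(π / 2), 1 / √(1 - m * sin θ ^ 2) ^ 3)
          - ellKParam m) := by
      rw [ellKParam, ← intervalIntegral.integral_sub
        ((continuous_one_div_sqrt_one_sub_cube hm).intervalIntegrable _ _)
        ((continuous_one_div_sqrt_one_sub hm).intervalIntegrable _ _),
        ← intervalIntegral.integral_const_mul]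
      congr 1 with θ
      have hf := one_sub_mul_sin_sq_pos hm θ
      have hq : 0 < √(1 - m * sin θ ^ 2) := sqrt_pos.2 hf
      have := sq_sqrt hf.le
      set q := √(1 - m * sin θ ^ 2)
      field_simp
      linarith
    rw [this, ← h]
    field_simp
  rw [← hint]
  set c := min 1 ((1 - m) / 2)
  have hcpos : 0 < c := lt_min one_pos (by linarith)
  have hmc : m < 1 - c := by linarith [min_le_right 1 ((1 - m) / 2)]
  have hlt {x : ℝ} (hx : x ∈ Iio (1 - c)) : x < 1 := by
    have : x < 1 - c := hx
    linarith
  refine (intervalIntegral.hasDerivAt_integral_of_dominated_loc_of_deriv_le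
    (F := fun x θ => 1 / √(1 - x * sin θ ^ 2))
    (F' := fun x θ => sin θ ^ 2 / (2 * √(1 - x * sin θ ^ 2) ^ 3))
    (bound := fun _ => 1 / (2 * √c ^ 3)) (Iio_mem_nhds hmc) ?_
    ((continuous_one_div_sqrt_one_sub hm).intervalIntegrable _ _) ?_ ?_ (by simp) ?_).2
  · filter_upwards [Iio_mem_nhds hmc] with x hx
    exact (continuous_one_div_sqrt_one_sub (hlt hx)).aestronglyMeasurable
  · exact (Continuous.div (by fun_prop) (by fun_prop) fun θ => (mul_pos two_pos
      (pow_pos (sqrt_pos.2 (one_sub_mul_sin_sq_pos hm θ)) 3)).ne').aestronglyMeasurable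
  · refine .of_forall fun θ _ x hx => ?_
    have hle := le_one_sub_mul_sin_sq (min_le_left _ _) (le_of_lt hx) θ
    have hsc : 0 < √c := sqrt_pos.2 hcpos
    rw [norm_of_nonneg (by positivity)]
    exact div_le_div₀ zero_le_one (sin_sq_le_one θ) (by positivity)
      (by gcongr)
  · refine .of_forall fun θ _ x hx => ?_
    have hf := one_sub_mul_sin_sq_pos (hlt hx) θ
    have hq : 0 < √(1 - x * sin θ ^ 2) := sqrt_pos.2 hf
    have := ((((hasDerivAt_id x).mul_const (sin θ ^ 2)).const_sub 1).sqrt hf.ne').inv hq.ne'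
    simp only [one_div]
    refine this.congr_deriv ?_
    simp only [id]
    field_simp

theorem ellEParam_le_ellKParam {m : ℝ} (h0 : 0 ≤ m) (hm : m < 1) : ellEParam m ≤ ellKParam m := by
  refine intervalIntegral.integral_mono_on (by positivity)
    ((continuous_sqrt_one_sub m).intervalIntegrable _ _)
    ((continuous_one_div_sqrt_one_sub hm).intervalIntegrable _ _) fun θ _ => ?_
  have hf := one_sub_mul_sin_sq_pos hm θ
  rw [le_div_iff₀ (sqrt_pos.2 hf), mul_self_sqrt hf.le]
  nlinarith [mul_nonneg h0 (sq_nonneg (sin θ))]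

theorem one_sub_mul_ellKParam_le {m : ℝ} (h0 : 0 ≤ m) (hm : m < 1) :
    (1 - m) * ellKParam m ≤ ellEParam m := by
  rw [ellKParam, ← intervalIntegral.integral_const_mul]
  refine intervalIntegral.integral_mono_on (by positivity)
    (((continuous_one_div_sqrt_one_sub hm).const_mul _).intervalIntegrable _ _)
    ((continuous_sqrt_one_sub m).intervalIntegrable _ _) fun θ _ => ?_
  have hf := one_sub_mul_sin_sq_pos hm θ
  rw [mul_one_div, div_le_iff₀ (sqrt_pos.2 hf), mul_self_sqrt hf.le]
  exact le_one_sub_mul_sin_sq (by linarith) (by linarith) θ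

theorem one_le_ellEParam {m : ℝ} (hm : m ≤ 1) : 1 ≤ ellEParam m := by
  have : ∫ θ in (0 : ℝ)..(π / 2), cos θ ≤ ellEParam m := by
    refine intervalIntegral.integral_mono_on (by positivity)
      (continuous_cos.intervalIntegrable _ _)
      ((continuous_sqrt_one_sub m).intervalIntegrable _ _) fun θ _ => le_sqrt_of_sq_le ?_
    rw [cos_sq']
    nlinarith [sq_nonneg (sin θ)]
  simpa using this

theorem ellEParam_one_sub_le {m : ℝ} (h0 : 0 ≤ m) : ellEParam (1 - m) ≤ 1 + √m * (π / 2) := by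
  have hle : ellEParam (1 - m) ≤ ∫ θ in (0 : ℝ)..(π / 2), (cos θ + √m) := by
    refine intervalIntegral.integral_mono_on (by positivity)
      ((continuous_sqrt_one_sub _).intervalIntegrable _ _)
      ((continuous_cos.add continuous_const).intervalIntegrable _ _) fun θ hθ => ?_
    have hc : 0 ≤ cos θ := cos_nonneg_of_mem_Icc ⟨by linarith [hθ.1, pi_pos], hθ.2⟩
    refine sqrt_le_iff.2 ⟨by positivity, ?_⟩
    nlinarith [sq_sqrt h0, cos_sq' θ, sin_sq_le_one θ, mul_nonneg hc (sqrt_nonneg m)]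
  refine hle.trans_eq ?_
  rw [intervalIntegral.integral_add (continuous_cos.intervalIntegrable _ _)
    (continuous_const.intervalIntegrable _ _)]
  simp [mul_comm]

theorem tendsto_ellKParam_zero : Tendsto ellKParam (𝓝[>] 0) (𝓝 (π / 2)) := by
  have hmem : Ioo (0 : ℝ) 1 ∈ 𝓝[>] (0 : ℝ) := Ioo_mem_nhdsGT one_pos
  have hlim : Tendsto (fun m : ℝ => π / 2 / √√(1 - m)) (𝓝[>] 0) (𝓝 (π / 2)) := by
    have : ContinuousAt (fun m : ℝ => π / 2 / √√(1 - m)) 0 :=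
      ContinuousAt.div (by fun_prop) (by fun_prop) (by simp)
    simpa using this.tendsto.mono_left nhdsWithin_le_nhds
  refine tendsto_of_tendsto_of_tendsto_of_le_of_le' tendsto_const_nhds hlim ?_ ?_
  · filter_upwards [hmem] with m hm using pi_div_two_le_ellKParam hm.1.le hm.2
  · filter_upwards [hmem] with m hm using ellKParam_le hm.2

theorem tendsto_ellEParam_one_sub : Tendsto (fun m => ellEParam (1 - m)) (𝓝[>] 0) (𝓝 1) := by
  have hlim : Tendsto (fun m : ℝ => 1 + √m * (π / 2)) (𝓝[>] 0) (𝓝 1) := by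
    have : Continuous (fun m : ℝ => 1 + √m * (π / 2)) := by fun_prop
    simpa using (this.tendsto 0).mono_left nhdsWithin_le_nhds
  refine tendsto_of_tendsto_of_tendsto_of_le_of_le' tendsto_const_nhds hlim ?_ ?_
  · filter_upwards [self_mem_nhdsWithin] with m hm
    exact one_le_ellEParam (by linarith [mem_Ioi.1 hm])
  · filter_upwards [self_mem_nhdsWithin] with m hm using ellEParam_one_sub_le (le_of_lt hm)

theorem tendsto_mul_ellKParam_one_sub :
    Tendsto (fun m => m * ellKParam (1 - m)) (𝓝[>] 0) (𝓝 0) := by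
  have hlim : Tendsto (fun m : ℝ => π / 2 * (√m * √√m)) (𝓝[>] 0) (𝓝 0) := by
    have : Continuous (fun m : ℝ => π / 2 * (√m * √√m)) := by fun_prop
    simpa using (this.tendsto 0).mono_left nhdsWithin_le_nhds
  refine tendsto_of_tendsto_of_tendsto_of_le_of_le' tendsto_const_nhds hlim ?_ ?_
  · filter_upwards [Ioo_mem_nhdsGT one_pos] with m hm
    exact mul_nonneg hm.1.le (ellKParam_pos (by linarith [hm.2]) (by linarith [hm.1])).le
  · filter_upwards [Ioo_mem_nhdsGT one_pos] with m hm
    have h := ellKParam_le (m := 1 - m) (by linarith [hm.1])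
    rw [sub_sub_cancel] at h
    calc m * ellKParam (1 - m) ≤ m * (π / 2 / √√m) := by gcongr; exact hm.1.le
      _ = π / 2 * (√m * (√m / √√m)) := by
        nth_rewrite 1 [← mul_self_sqrt hm.1.le]; ring
      _ = π / 2 * (√m * √√m) := by rw [div_sqrt]

/-- Legendre's relation between complete elliptic integrals. -/
theorem legendre_relation {m : ℝ} (hm : m ∈ Ioo (0 : ℝ) 1) :
    ellKParam (1 - m) * (ellEParam m - ellKParam m) + ellKParam m * ellEParam (1 - m) = π / 2 := by
  set W : ℝ → ℝ := fun m =>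
    ellKParam (1 - m) * (ellEParam m - ellKParam m) + ellKParam m * ellEParam (1 - m)
  have hderiv (x : ℝ) (hx : x ∈ Ioo (0 : ℝ) 1) : HasDerivAt W 0 x := by
    obtain ⟨hx0, hx1⟩ := hx
    have hs : HasDerivAt (fun x : ℝ => 1 - x) (-1) x := (hasDerivAt_id x).const_sub 1
    have hx2 : 0 < 1 - x := by linarith
    have hK := hasDerivAt_ellKParam hx0.ne' hx1
    have hE := hasDerivAt_ellEParam hx0.ne' hx1
    have hK' := (hasDerivAt_ellKParam hx2.ne' (by linarith)).comp x hs
    have hE' := (hasDerivAt_ellEParam hx2.ne' (by linarith)).comp x hs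
    refine ((hK'.mul (hE.sub hK)).add (hK.mul hE')).congr_deriv ?_
    simp only [Function.comp_apply, Pi.sub_apply, sub_sub_cancel]
    field_simp
    ring
  have hconst : ∀ x ∈ Ioo (0 : ℝ) 1, W x = W m := fun x hx =>
    isOpen_Ioo.is_const_of_deriv_eq_zero isPreconnected_Ioo
      (fun y hy => (hderiv y hy).differentiableAt.differentiableWithinAt)
      (fun y hy => (hderiv y hy).deriv) hx hm
  have hlim : Tendsto W (𝓝[>] 0) (𝓝 (π / 2)) := by
    have h1 : Tendsto (fun m => ellKParam (1 - m) * (ellEParam m - ellKParam m))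
        (𝓝[>] 0) (𝓝 0) := by
      have hlow := (tendsto_mul_ellKParam_one_sub.mul tendsto_ellKParam_zero).neg
      rw [zero_mul, neg_zero] at hlow
      refine tendsto_of_tendsto_of_tendsto_of_le_of_le' hlow tendsto_const_nhds ?_ ?_
      · filter_upwards [Ioo_mem_nhdsGT one_pos] with m hm
        have := ellKParam_pos (m := 1 - m) (by linarith [hm.2]) (by linarith [hm.1])
        nlinarith [one_sub_mul_ellKParam_le hm.1.le hm.2]
      · filter_upwards [Ioo_mem_nhdsGT one_pos] with m hm
        have := ellKParam_pos (m := 1 - m) (by linarith [hm.2]) (by linarith [hm.1])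
        nlinarith [ellEParam_le_ellKParam hm.1.le hm.2]
    simpa using h1.add (tendsto_ellKParam_zero.mul tendsto_ellEParam_one_sub)
  have hev : ∀ᶠ x in 𝓝[>] (0 : ℝ), W x = W m := by
    filter_upwards [Ioo_mem_nhdsGT one_pos] with x hx using hconst x hx
  exact tendsto_nhds_unique (tendsto_const_nhds.congr' (hev.mono fun _ h => h.symm)) hlim

/-- The quotient of the elliptic integrals at complementary parameters. -/
noncomputable def ellRatio (m : ℝ) : ℝ := ellKParam m / ellKParam (1 - m)

theorem ellRatio_pos {m : ℝ} (hm : m ∈ Ioo (0 : ℝ) 1) : 0 < ellRatio m :=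
  div_pos (ellKParam_pos hm.1.le hm.2)
    (ellKParam_pos (by linarith [hm.2]) (by linarith [hm.1]))

theorem ellRatio_half : ellRatio (1 / 2) = 1 := by
  rw [ellRatio, show (1 : ℝ) - 1 / 2 = 1 / 2 by norm_num]
  exact div_self (ellKParam_pos (by norm_num) (by norm_num)).ne'

theorem hasDerivAt_ellRatio {m : ℝ} (hm : m ∈ Ioo (0 : ℝ) 1) :
    HasDerivAt ellRatio (π / (4 * m * (1 - m) * ellKParam (1 - m) ^ 2)) m := by
  obtain ⟨h0, h1⟩ := hm
  have h2 : 0 < 1 - m := by linarith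
  have hs : HasDerivAt (fun x : ℝ => 1 - x) (-1) m := (hasDerivAt_id m).const_sub 1
  have hK' := (hasDerivAt_ellKParam h2.ne' (by linarith)).comp m hs
  have hpos := ellKParam_pos (m := 1 - m) h2.le (by linarith)
  refine ((hasDerivAt_ellKParam h0.ne' h1).div hK' hpos.ne').congr_deriv ?_
  have hL := legendre_relation ⟨h0, h1⟩
  rw [show π = 2 * (π / 2) by ring, ← hL]
  simp only [Function.comp_apply, sub_sub_cancel]
  field_simp
  ring

theorem hasDerivAt_log_div_one_sub {m : ℝ} (hm : m ∈ Ioo (0 : ℝ) 1) :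
    HasDerivAt (fun m => log (m / (1 - m))) (1 / (m * (1 - m))) m := by
  have h2 : 0 < 1 - m := by linarith [hm.2]
  have h1 := hm.1
  refine (((hasDerivAt_id m).div ((hasDerivAt_id m).const_sub 1) h2.ne').log
    (div_pos hm.1 h2).ne').congr_deriv ?_
  simp only [id, Pi.div_apply]
  field_simp
  ring

theorem monotoneOn_Ioo_of_hasDerivAt_nonneg {a b : ℝ} {f f' : ℝ → ℝ}
    (hf : ∀ x ∈ Ioo a b, HasDerivAt f (f' x) x) (hf' : ∀ x ∈ Ioo a b, 0 ≤ f' x) :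
    MonotoneOn f (Ioo a b) := by
  refine monotoneOn_of_hasDerivWithinAt_nonneg (f' := f') (convex_Ioo a b)
    (fun x hx => (hf x hx).continuousAt.continuousWithinAt) ?_ ?_ <;> rw [interior_Ioo]
  exacts [fun x hx => (hf x hx).hasDerivWithinAt, hf']

theorem monotoneOn_ellRatio : MonotoneOn ellRatio (Ioo 0 1) :=
  monotoneOn_Ioo_of_hasDerivAt_nonneg (fun _ => hasDerivAt_ellRatio) fun m hm => by
    have := hm.1
    have : 0 < 1 - m := by linarith [hm.2]
    positivity

theorem pi_mul_ellRatio_sub_one_le_log {m : ℝ} (hm : m ∈ Ico (1 / 2 : ℝ) 1) :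
    π * (ellRatio m - 1) ≤ log (m / (1 - m)) := by
  have hmono : MonotoneOn (fun m => log (m / (1 - m)) - π * ellRatio m) (Ioo 0 1) := by
    refine monotoneOn_Ioo_of_hasDerivAt_nonneg (fun x hx =>
      (hasDerivAt_log_div_one_sub hx).sub ((hasDerivAt_ellRatio hx).const_mul π)) fun x hx => ?_
    have h1 := hx.1
    have h2 : 0 < 1 - x := by linarith [hx.2]
    have hK := pi_div_two_le_ellKParam h2.le (by linarith)
    have hK0 := ellKParam_pos h2.le (by linarith)
    have : 1 / (x * (1 - x)) - π * (π / (4 * x * (1 - x) * ellKParam (1 - x) ^ 2))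
        = (ellKParam (1 - x) ^ 2 - (π / 2) ^ 2) / (x * (1 - x) * ellKParam (1 - x) ^ 2) := by
      field_simp
      ring
    rw [this]
    have : (π / 2) ^ 2 ≤ ellKParam (1 - x) ^ 2 := by gcongr
    exact div_nonneg (by linarith) (by positivity)
  have h := hmono (a := 1 / 2) (by norm_num) ⟨by linarith [hm.1], hm.2⟩ hm.1
  simp only [ellRatio_half] at h
  norm_num at h
  linarith

theorem four_div_pi_sq_le {m : ℝ} (hm : m ∈ Ioo (0 : ℝ) 1) :
    4 / π ^ 2 ≤ 1 / ellKParam m ^ 2 + 1 / ellKParam (1 - m) ^ 2 := by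
  have key {x : ℝ} (hx : x ∈ Ioo (0 : ℝ) 1) : 4 / π ^ 2 * (1 - x) ≤ 1 / ellKParam x ^ 2 := by
    have hx1 : 0 < 1 - x := by linarith [hx.2]
    have hK0 := ellKParam_pos hx.1.le hx.2
    have hsq : ellKParam x ^ 2 ≤ (π / 2 / √√(1 - x)) ^ 2 := by
      gcongr
      exact ellKParam_le hx.2
    rw [div_pow, sq_sqrt (sqrt_nonneg _)] at hsq
    have hle : 1 - x ≤ √(1 - x) := le_sqrt_of_sq_le (by nlinarith [hx.1])
    calc 4 / π ^ 2 * (1 - x) ≤ 4 / π ^ 2 * √(1 - x) := by gcongr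
      _ = 1 / ((π / 2) ^ 2 / √(1 - x)) := by field_simp; norm_num
      _ ≤ 1 / ellKParam x ^ 2 := by gcongr
  have h1 := key hm
  have h2 := key (x := 1 - m) ⟨by linarith [hm.2], by linarith [hm.1]⟩
  linarith

theorem log_le_pi_mul_ellRatio_sub_inv {m : ℝ} (hm : m ∈ Ico (1 / 2 : ℝ) 1) :
    log (m / (1 - m)) ≤ π * (ellRatio m - 1 / ellRatio m) := by
  have hmono : MonotoneOn
      (fun m => π * (ellRatio m - (ellRatio m)⁻¹) - log (m / (1 - m))) (Ioo 0 1) := by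
    refine monotoneOn_Ioo_of_hasDerivAt_nonneg (fun x hx =>
      (((hasDerivAt_ellRatio hx).sub ((hasDerivAt_ellRatio hx).inv (ellRatio_pos hx).ne')).const_mul
        π).sub (hasDerivAt_log_div_one_sub hx)) fun x hx => ?_
    have h1 := hx.1
    have h2 : 0 < 1 - x := by linarith [hx.2]
    have hK := ellKParam_pos h1.le hx.2
    have hK' := ellKParam_pos h2.le (by linarith)
    have : π * (π / (4 * x * (1 - x) * ellKParam (1 - x) ^ 2)
          - -(π / (4 * x * (1 - x) * ellKParam (1 - x) ^ 2)) / ellRatio x ^ 2) - 1 / (x * (1 - x))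
        = π ^ 2 / (4 * x * (1 - x)) *
          (1 / ellKParam x ^ 2 + 1 / ellKParam (1 - x) ^ 2 - 4 / π ^ 2) := by
      rw [ellRatio]
      field_simp
      ring
    rw [this]
    exact mul_nonneg (by positivity) (sub_nonneg.2 (four_div_pi_sq_le hx))
  have h := hmono (a := 1 / 2) (by norm_num) ⟨by linarith [hm.1], hm.2⟩ hm.1
  simp only [ellRatio_half] at h
  norm_num at h
  simpa using h

theorem exists_ellRatio_eq {K : ℝ} (hK : 1 ≤ K) : ∃ m ∈ Ioo (0 : ℝ) 1, ellRatio m = K := by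
  set e := exp (π * K) with he
  have he1 : 1 ≤ e := one_le_exp (by positivity)
  set b := e / (1 + e) with hb
  have hb1 : b < 1 := by rw [hb, div_lt_one (by positivity)]; linarith
  have hb2 : 1 / 2 ≤ b := by rw [hb, div_le_div_iff₀ two_pos (by positivity)]; linarith
  have hsub : Icc (1 / 2) b ⊆ Ioo (0 : ℝ) 1 := fun x hx =>
    ⟨by linarith [hx.1], by linarith [hx.2]⟩
  have hKb : K ≤ ellRatio b := by
    have h := log_le_pi_mul_ellRatio_sub_inv ⟨hb2, hb1⟩
    have : b / (1 - b) = e := by rw [hb]; field_simp; ring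
    rw [this, he, log_exp] at h
    have h' := le_of_mul_le_mul_left h pi_pos
    have := one_div_pos.2 (ellRatio_pos (hsub ⟨hb2, le_rfl⟩))
    linarith
  obtain ⟨m, hm, hmK⟩ := intermediate_value_Icc hb2
    (fun x hx => (hasDerivAt_ellRatio (hsub hx)).continuousAt.continuousWithinAt)
    ⟨ellRatio_half.trans_le hK, hKb⟩
  exact ⟨m, hsub hm, hmK⟩

theorem mu_eq_pi_div_two_div_ellRatio {r : ℝ} (hr : r ^ 2 ≤ 1) :
    mu r = π / 2 / ellRatio (r ^ 2) := by
  have h : ellK √(1 - r ^ 2) = ellKParam (1 - r ^ 2) := by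
    rw [ellK, sq_sqrt (by linarith)]
    rfl
  rw [mu, h, ellRatio, div_div_eq_mul_div]
  rfl

theorem phi_inv_sqrt_two_spec {K : ℝ} (hK : 1 ≤ K) :
    phi K (1 / √2) ∈ Ioo (0 : ℝ) 1 ∧ ellRatio (phi K (1 / √2) ^ 2) = K := by
  have hsq : (1 / √2 : ℝ) ^ 2 = 1 / 2 := by rw [div_pow, sq_sqrt two_pos.le, one_pow]
  have hphi : phi K (1 / √2) = muInv (π / 2 / K) := by
    have h1 : (1 / √2 : ℝ) ≠ 1 := fun h => by norm_num [h] at hsq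
    rw [phi, if_neg (by positivity), if_neg h1, mu_eq_pi_div_two_div_ellRatio (by norm_num [hsq]),
      hsq, ellRatio_half, div_one]
  obtain ⟨m, hm, hmK⟩ := exists_ellRatio_eq hK
  have hex : ∃ r ∈ Ioo (0 : ℝ) 1, mu r = π / 2 / K := by
    refine ⟨√m, ⟨sqrt_pos.2 hm.1, by simpa using sqrt_lt_sqrt hm.1.le hm.2⟩, ?_⟩
    rw [mu_eq_pi_div_two_div_ellRatio] <;> rw [sq_sqrt hm.1.le]
    exacts [by rw [hmK], hm.2.le]
  have hmem : muInv (π / 2 / K) ∈ Ioo (0 : ℝ) 1 := Function.invFunOn_mem hex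
  have heq : mu (muInv (π / 2 / K)) = π / 2 / K := Function.invFunOn_eq hex
  rw [hphi]
  refine ⟨hmem, ?_⟩
  rw [mu_eq_pi_div_two_div_ellRatio (pow_le_one₀ hmem.1.le hmem.2.le)] at heq
  rw [div_eq_mul_inv (π / 2), div_eq_mul_inv (π / 2)] at heq
  exact inv_injective (mul_left_cancel₀ (by positivity) heq)

theorem lambda_bounds (K : ℝ) (hK : 1 < K) :
    Real.exp (Real.pi * (K - 1)) ≤
      (phi K (1 / Real.sqrt 2))^2 / (1 - (phi K (1 / Real.sqrt 2))^2) ∧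
    (phi K (1 / Real.sqrt 2))^2 / (1 - (phi K (1 / Real.sqrt 2))^2) ≤
      Real.exp (Real.pi * (K - 1/K)) := by
  obtain ⟨⟨hu0, hu1⟩, hratio⟩ := phi_inv_sqrt_two_spec hK.le
  have hm0 : 0 < phi K (1 / √2) ^ 2 := by positivity
  have hm1 : phi K (1 / √2) ^ 2 < 1 := pow_lt_one₀ hu0.le hu1 two_ne_zero
  generalize phi K (1 / √2) ^ 2 = m at *
  have hhalf : 1 / 2 ≤ m := by
    by_contra! h
    have := monotoneOn_ellRatio ⟨hm0, hm1⟩ (by norm_num : (1 / 2 : ℝ) ∈ Ioo (0 : ℝ) 1) h.le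
    rw [hratio, ellRatio_half] at this
    linarith
  have hpos : 0 < m / (1 - m) := div_pos hm0 (by linarith)
  have hlow := pi_mul_ellRatio_sub_one_le_log ⟨hhalf, hm1⟩
  have hupp := log_le_pi_mul_ellRatio_sub_inv ⟨hhalf, hm1⟩
  rw [hratio] at hlow hupp
  exact ⟨(le_log_iff_exp_le hpos).1 hlow, (log_le_iff_le_exp hpos).1 hupp⟩
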